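/- Let a be a ribbon with n ≥ 4 nodes p_1, …, p_n (in cyclic order), all of which are positive, with levels l_i = φ(p_i), and suppose that the intersection over i = 1, …, n−1 of the closed intervals with endpoints l_i and l_{i+1} is nonempty (a is a positive alternation). Then γ(a) = 1: every extension of a has at least one critical point in the open unit disk, and some extension of a has exactly one critical point. -/

import Mathlib

open scoped RealInnerProductSpace

noncomputable section

abbrev E2 : Type := EuclideanSpace ℝ (Fin 2)

/-- The point (cos t, sin t) on the unit circle in ℝ². -/
def sphPt (t : ℝ) : E2 := (EuclideanSpace.equiv (Fin 2) ℝ).symm ![Real.cos t, Real.sin t]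

/-- A ribbon with `n` nodes, encoded via the angle parametrization `g = φ ∘ (cos, sin)`
of a C^∞ function `φ : S¹ → ℝ` whose critical points on the circle are exactly the `n`
nondegenerate local extrema (nodes) at angles `θ 0 < θ 1 < ⋯ < θ (n-1)` in `[0, 2π)`,
with pairwise distinct critical values, together with a marking `ν` of the nodes by `±1`. -/
structure Ribbon (n : ℕ) : Type where
  g : ℝ → ℝ
  θ : Fin n → ℝ
  ν : Fin n → ℤ
  n_even : Even n
  n_pos : 0 < n
  smooth_g : ContDiff ℝ (⊤ : ℕ∞) g
  periodic_g : Function.Periodic g (2 * Real.pi)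
  theta_mem : ∀ i, θ i ∈ Set.Ico (0 : ℝ) (2 * Real.pi)
  theta_mono : StrictMono θ
  node_crit : ∀ i, deriv g (θ i) = 0
  node_nondeg : ∀ i, deriv (deriv g) (θ i) ≠ 0
  crit_only : ∀ t ∈ Set.Ico (0 : ℝ) (2 * Real.pi), deriv g t = 0 → ∃ i, t = θ i
  values_distinct : ∀ i j, g (θ i) = g (θ j) → i = j
  nu_sign : ∀ i, ν i = 1 ∨ ν i = -1

/-- The signature σ = s₊ − s₋ of a ribbon. -/
def Ribbon.sigma {n : ℕ} (a : Ribbon n) : ℤ := ∑ i, a.ν i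

/-- Critical points of `f` in the open unit disk. -/
def critPts (f : E2 → ℝ) : Set E2 :=
  {x | x ∈ Metric.ball (0 : E2) 1 ∧ fderiv ℝ f x = 0}

/-- `f : ℝ² → ℝ` is an extension of the ribbon `a`: it is C^∞, agrees with `φ` on the unit
circle, has nowhere-vanishing gradient on the circle, and at each node the radial derivative
`⟪∇f(p), p⟫` has sign `ν p` if `p` is a local maximum of `φ` (second derivative of `g`
negative there) and sign `−ν p` if `p` is a local minimum of `φ`. -/
def IsExtension {n : ℕ} (a : Ribbon n) (f : E2 → ℝ) : Prop :=
  ContDiff ℝ (⊤ : ℕ∞) f ∧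
  (∀ t : ℝ, f (sphPt t) = a.g t) ∧
  (∀ x ∈ Metric.sphere (0 : E2) 1, fderiv ℝ f x ≠ 0) ∧
  (∀ i : Fin n,
    (deriv (deriv a.g) (a.θ i) < 0 →
      0 < (a.ν i : ℝ) * ⟪gradient f (sphPt (a.θ i)), sphPt (a.θ i)⟫) ∧
    (0 < deriv (deriv a.g) (a.θ i) →
      (a.ν i : ℝ) * ⟪gradient f (sphPt (a.θ i)), sphPt (a.θ i)⟫ < 0))

/-- The ribbon invariant γ: the infimum, over all extensions `f` of `a`, of the number of
critical points of `f` in the open unit disk (a value in `ℕ∞`). -/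
def gammaR {n : ℕ} (a : Ribbon n) : ℕ∞ :=
  sInf {k : ℕ∞ | ∃ f : E2 → ℝ, IsExtension a f ∧ (critPts f).encard = k}

/-!
Along the circle, let `β` be the angle from the outward normal to the gradient of an extension.
If the extension has no critical point in the disk, the direction of the gradient lifts to a
continuous angle on the closed disk, so `β` drops by `2π` per turn. Between consecutive nodes the
tangential component of the gradient keeps its sign, which confines `β` to a half-turn, and the
markings at the two nodes determine its change as `-(ν + ν') π / 2`. Summing over the nodes,
`2π = σ π`, that is `σ = 2`, whereas a positive ribbon has `σ = n ≥ 4`.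

Conversely, a level `c` strictly between all minima and all maxima makes the cone over `φ - c`,
flattened at its apex, an extension whose only critical point is the apex: its radial derivative
is proportional to `φ - c`, its tangential derivative to `φ'`, and these never vanish together.
-/

open Filter Set
open scoped ContDiff Real Topology

section FlatBump

-- A single universe, so that induction on derivatives can pass from `V` to `E →L[ℝ] V`.
universe u

variable {E : Type u} [NormedAddCommGroup E]

/-- The radial function `exp (-1 / ‖x‖²)`, extended by `0` at the origin. It vanishes there to
infinite order and so smooths out singularities of homogeneous functions. -/
def flatBump (x : E) : ℝ := expNegInvGlue (‖x‖ ^ 2)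

lemma flatBump_zero : flatBump (0 : E) = 0 := by simp [flatBump]

lemma flatBump_nonneg (x : E) : 0 ≤ flatBump x := expNegInvGlue.nonneg _

lemma tendsto_inv_norm_pow_mul_flatBump (N : ℕ) :
    Tendsto (fun x : E => ‖x‖⁻¹ ^ N * flatBump x) (𝓝 0) (𝓝 0) := by
  have hsq : Tendsto (fun x : E => ‖x‖ ^ 2) (𝓝 0) (𝓝 0) :=
    Continuous.tendsto' (by fun_prop) _ _ (by simp)
  have hpow : Tendsto (fun x : E => ‖x‖ ^ N) (𝓝 0) (𝓝 (0 ^ N)) :=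
    Continuous.tendsto' (by fun_prop) _ _ (by simp)
  have hmul := hpow.mul
    ((expNegInvGlue.tendsto_polynomial_inv_mul_zero (Polynomial.X ^ N)).comp hsq)
  rw [mul_zero] at hmul
  refine hmul.congr fun x => ?_
  rcases eq_or_ne x 0 with rfl | hx
  · simp [flatBump_zero]
  · have hx' : ‖x‖ ≠ 0 := norm_ne_zero_iff.2 hx
    simp only [Function.comp_apply, Polynomial.eval_pow, Polynomial.eval_X, flatBump]
    rw [← mul_assoc, ← mul_pow]
    congr 2
    field_simp

lemma hasDerivAt_expNegInvGlue (s : ℝ) :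
    HasDerivAt expNegInvGlue (s⁻¹ ^ 2 * expNegInvGlue s) s := by
  simpa using expNegInvGlue.hasDerivAt_polynomial_eval_inv_mul 1 s

variable [InnerProductSpace ℝ E]

/-- The logarithmic derivative `x ↦ 2 ‖x‖⁻⁴ ⟪x, ·⟫` of `flatBump`. -/
def flatBumpLogDeriv (x : E) : E →L[ℝ] ℝ := (2 * (‖x‖ ^ 2)⁻¹ ^ 2) • innerSL ℝ x

lemma hasFDerivAt_flatBump (x : E) :
    HasFDerivAt flatBump (flatBump x • flatBumpLogDeriv x) x := by
  convert! (hasDerivAt_expNegInvGlue (‖x‖ ^ 2)).comp_hasFDerivAt x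
    (hasStrictFDerivAt_norm_sq x).hasFDerivAt using 1
  ext v
  simp only [flatBumpLogDeriv, flatBump, smul_apply, smul_eq_mul, nsmul_eq_mul, Nat.cast_ofNat]
  ring

/-- `G` is smooth away from the origin and positively homogeneous of degree `-N`. -/
structure SmoothHomogeneous {V : Type u} [NormedAddCommGroup V] [NormedSpace ℝ V]
    (N : ℕ) (G : E → V) : Prop where
  contDiffAt : ∀ x ≠ 0, ContDiffAt ℝ ∞ G x
  protected map_smul : ∀ c : ℝ, 0 < c → ∀ x ≠ 0, G (c • x) = c⁻¹ ^ N • G x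

namespace SmoothHomogeneous

variable {V W : Type u} [NormedAddCommGroup V] [NormedSpace ℝ V]
  [NormedAddCommGroup W] [NormedSpace ℝ W] {M N : ℕ} {G : E → V}

lemma exists_norm_le [FiniteDimensional ℝ E] (hG : SmoothHomogeneous N G) :
    ∃ C, ∀ x ≠ 0, ‖G x‖ ≤ C * ‖x‖⁻¹ ^ N := by
  have hcont : ContinuousOn G (Metric.sphere 0 1) := fun x hx =>
    (hG.contDiffAt x (ne_zero_of_mem_unit_sphere ⟨x, hx⟩)).continuousAt.continuousWithinAt
  obtain ⟨C, hC⟩ := (isCompact_sphere (0 : E) 1).exists_bound_of_continuousOn hcont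
  refine ⟨C, fun x hx => ?_⟩
  have hpos : 0 < ‖x‖ := norm_pos_iff.2 hx
  have hunit : ‖‖x‖⁻¹ • x‖ = 1 := norm_smul_inv_norm hx
  have hscale : G x = ‖x‖⁻¹ ^ N • G (‖x‖⁻¹ • x) := by
    rw [← hG.map_smul ‖x‖ hpos _ (norm_ne_zero_iff.1 (by simp [hunit])), smul_inv_smul₀ hpos.ne']
  rw [hscale, norm_smul, Real.norm_of_nonneg (by positivity), mul_comm]
  gcongr
  exact hC _ (by simpa using hunit)

lemma hasFDerivAt_flatBump_smul_zero [FiniteDimensional ℝ E] (hG : SmoothHomogeneous N G) :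
    HasFDerivAt (fun x => flatBump x • G x) (0 : E →L[ℝ] V) 0 := by
  obtain ⟨C, hC⟩ := hG.exists_norm_le
  simp only [hasFDerivAt_iff_isLittleO_nhds_zero, zero_add, flatBump_zero, zero_smul, sub_zero,
    zero_apply, Asymptotics.isLittleO_iff]
  intro ε hε
  have hlim := (tendsto_inv_norm_pow_mul_flatBump (E := E) (N + 1)).const_mul C
  rw [mul_zero] at hlim
  filter_upwards [hlim.eventually (gt_mem_nhds hε)] with x hx
  rcases eq_or_ne x 0 with rfl | h0
  · simp [flatBump_zero]
  have hpos : 0 < ‖x‖ := norm_pos_iff.2 h0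
  rw [norm_smul, Real.norm_of_nonneg (flatBump_nonneg x)]
  calc flatBump x * ‖G x‖ ≤ flatBump x * (C * ‖x‖⁻¹ ^ N) :=
        mul_le_mul_of_nonneg_left (hC x h0) (flatBump_nonneg x)
    _ = C * (‖x‖⁻¹ ^ (N + 1) * flatBump x) * ‖x‖ := by
        rw [pow_succ]
        linear_combination (-(C * ‖x‖⁻¹ ^ N * flatBump x)) * inv_mul_cancel₀ hpos.ne'
    _ ≤ ε * ‖x‖ := by gcongr

protected lemma flatBumpLogDeriv : SmoothHomogeneous 3 (flatBumpLogDeriv (E := E)) where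
  contDiffAt x hx := by
    have hx' : ‖x‖ ^ 2 ≠ 0 := by simpa using hx
    exact (contDiffAt_const.mul (((contDiff_norm_sq ℝ).contDiffAt.inv hx').pow 2)).smul
      (innerSL ℝ (E := E)).contDiff.contDiffAt
  map_smul c hc x hx := by
    have hx' : ‖x‖ ≠ 0 := norm_ne_zero_iff.2 hx
    ext v
    simp only [flatBumpLogDeriv, norm_smul, Real.norm_of_nonneg hc.le, map_smul, smul_apply,
      smul_eq_mul]
    field_simp

protected lemma smulRight {L : E → E →L[ℝ] ℝ} (hL : SmoothHomogeneous M L)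
    (hG : SmoothHomogeneous N G) : SmoothHomogeneous (M + N) fun x => (L x).smulRight (G x) where
  contDiffAt x hx := (hL.contDiffAt x hx).smulRight (hG.contDiffAt x hx)
  map_smul c hc x hx := by
    ext v
    simp only [hL.map_smul c hc x hx, hG.map_smul c hc x hx, ContinuousLinearMap.smulRight_apply,
      smul_apply, smul_eq_mul, smul_smul]
    congr 1
    ring

protected lemma hasFDerivAt (hG : SmoothHomogeneous N G) {x : E} (hx : x ≠ 0) :
    HasFDerivAt G (fderiv ℝ G x) x :=
  ((hG.contDiffAt x hx).differentiableAt (by simp)).hasFDerivAt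

protected lemma fderiv (hG : SmoothHomogeneous N G) : SmoothHomogeneous (N + 1) (fderiv ℝ G) where
  contDiffAt x hx := (hG.contDiffAt x hx).fderiv_right (by simp)
  map_smul c hc x hx := by
    have hcongr : (fun y => G (c • y)) =ᶠ[𝓝 x] fun y => c⁻¹ ^ N • G y := by
      filter_upwards [isOpen_ne.mem_nhds hx] with y hy using hG.map_smul c hc y hy
    have hchain : c • fderiv ℝ G (c • x) = c⁻¹ ^ N • fderiv ℝ G x := by
      rw [← fderiv_comp_smul, hcongr.fderiv_eq]
      exact ((hG.hasFDerivAt hx).const_smul _).fderiv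
    rw [pow_succ', mul_smul, ← hchain, inv_smul_smul₀ hc.ne']

variable [FiniteDimensional ℝ E]

lemma hasFDerivAt_flatBump_smul (hG : SmoothHomogeneous N G) (x : E) :
    HasFDerivAt (fun x => flatBump x • G x)
      (flatBump x • fderiv ℝ G x + flatBump x • (flatBumpLogDeriv x).smulRight (G x)) x := by
  rcases eq_or_ne x 0 with rfl | hx
  · simpa [flatBump_zero] using hG.hasFDerivAt_flatBump_smul_zero
  · convert! (hasFDerivAt_flatBump x).smul (hG.hasFDerivAt hx) using 2
    ext v
    simp [smul_smul]

/- The derivative of `flatBump • G` is a sum of two functions of the same form, so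
differentiability bootstraps to smoothness. -/
lemma contDiff_natCast_flatBump_smul (m : ℕ) (hG : SmoothHomogeneous N G) :
    ContDiff ℝ m fun x => flatBump x • G x := by
  induction m generalizing V N with
  | zero =>
    exact contDiff_zero.2 <| continuous_iff_continuousAt.2 fun x =>
      (hG.hasFDerivAt_flatBump_smul x).continuousAt
  | succ m ih =>
    rw [Nat.cast_succ, contDiff_succ_iff_fderiv]
    refine ⟨fun x => (hG.hasFDerivAt_flatBump_smul x).differentiableAt, by simp, ?_⟩
    rw [funext fun x => (hG.hasFDerivAt_flatBump_smul x).fderiv]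
    exact (ih hG.fderiv).add (ih (SmoothHomogeneous.flatBumpLogDeriv.smulRight hG))

theorem contDiff_flatBump_smul (hG : SmoothHomogeneous N G) :
    ContDiff ℝ ∞ fun x => flatBump x • G x :=
  contDiff_infty.2 fun m => hG.contDiff_natCast_flatBump_smul m

end SmoothHomogeneous

end FlatBump

section Plane

/-- The isometric identification `(x, y) ↦ x + i y` of the Euclidean plane with `ℂ`. -/
def toComplex : E2 ≃ₗᵢ[ℝ] ℂ := Complex.orthonormalBasisOneI.repr.symm

lemma toComplex_sphPt (t : ℝ) : toComplex (sphPt t) = Complex.exp (t * Complex.I) := by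
  rw [toComplex, Complex.orthonormalBasisOneI_repr_symm_apply, Complex.exp_mul_I]
  simp [sphPt]

lemma norm_sphPt (t : ℝ) : ‖sphPt t‖ = 1 := by
  rw [← toComplex.norm_map, toComplex_sphPt, Complex.norm_exp_ofReal_mul_I]

lemma exists_eq_norm_smul_sphPt (x : E2) : ∃ t : ℝ, x = ‖x‖ • sphPt t := by
  refine ⟨(toComplex x).arg, toComplex.injective ?_⟩
  rw [map_smul, toComplex_sphPt, Complex.real_smul, ← toComplex.norm_map,
    Complex.norm_mul_exp_arg_mul_I]

lemma periodic_sphPt : Function.Periodic sphPt (2 * π) := fun t => by simp [sphPt]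

lemma hasDerivAt_sphPt (t : ℝ) : HasDerivAt sphPt (sphPt (t + π / 2)) t := by
  have hcoord : HasDerivAt (fun t : ℝ => ![Real.cos t, Real.sin t])
      ![Real.cos (t + π / 2), Real.sin (t + π / 2)] t := by
    rw [hasDerivAt_pi]
    intro i
    fin_cases i
    · simpa [Real.cos_add_pi_div_two] using Real.hasDerivAt_cos t
    · simpa [Real.sin_add_pi_div_two] using Real.hasDerivAt_sin t
  exact (EuclideanSpace.equiv (Fin 2) ℝ).symm.toContinuousLinearMap.hasFDerivAt.comp_hasDerivAt
    t hcoord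

end Plane

section ConicalExtension

lemma eq_of_coe_angle_eq {α : Type*} {g : ℝ → α} (hg : Function.Periodic g (2 * π)) {s t : ℝ}
    (h : (s : Real.Angle) = t) : g s = g t :=
  congrArg hg.lift h

/-- The function on the plane that is constant on open rays from the origin and takes the value
`g t` in direction `t`, for `g` of period `2π`. -/
def angular {V : Type*} (g : ℝ → V) (x : E2) : V := g (toComplex x).arg

lemma angular_smul_sphPt {V : Type*} {g : ℝ → V} (hg : Function.Periodic g (2 * π)) {r : ℝ}
    (hr : 0 < r) (t : ℝ) : angular g (r • sphPt t) = g t := by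
  refine eq_of_coe_angle_eq hg ?_
  rw [map_smul, toComplex_sphPt, Complex.real_smul, Complex.arg_real_mul _ hr,
    Complex.arg_exp_mul_I, Real.Angle.coe_toIocMod]

variable {V : Type} [NormedAddCommGroup V] [NormedSpace ℝ V]

lemma smoothHomogeneous_angular {g : ℝ → V} (hg : Function.Periodic g (2 * π))
    (hs : ContDiff ℝ ∞ g) : SmoothHomogeneous 0 (angular g) where
  contDiffAt x hx := by
    have ne_zero {y : E2} (hy : y ≠ 0) : toComplex y ≠ 0 := by simpa using hy
    set z := toComplex x
    have hz : z ≠ 0 := ne_zero hx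
    have hlocal : angular g =ᶠ[𝓝 x]
        fun y => g (z.arg + (Complex.log (toComplex y * z⁻¹)).im) := by
      filter_upwards [isOpen_ne.mem_nhds hx] with y hy
      refine eq_of_coe_angle_eq hg ?_
      rw [Complex.log_im, Real.Angle.coe_add,
        Complex.arg_mul_coe_angle (ne_zero hy) (inv_ne_zero hz), Complex.arg_inv_coe_angle]
      abel
    have hrot : ContDiffAt ℝ ∞ (fun y => toComplex y * z⁻¹) x :=
      toComplex.contDiff.contDiffAt.mul contDiffAt_const
    have hlog : ContDiffAt ℝ ∞ Complex.log (toComplex x * z⁻¹) :=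
      (Complex.contDiffAt_log (by simp [z, mul_inv_cancel₀ hz])).restrict_scalars ℝ
    have hangle := (contDiffAt_const (c := z.arg)).add
      (Complex.imCLM.contDiff.contDiffAt.comp x (hlog.comp x hrot))
    exact (hs.contDiffAt.comp x hangle).congr_of_eventuallyEq hlocal
  map_smul c hc x _ := by simp [angular, Complex.real_smul, Complex.arg_real_mul _ hc]

/-- The extension of a function `g` of period `2π` on the unit circle which along the ray in
direction `t` goes monotonically from `c` at the origin to `g t` on the circle. It is the cone over
`g - c`, flattened at the apex to make it smooth there. -/
def conicalExtension (g : ℝ → ℝ) (c : ℝ) (x : E2) : ℝ :=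
  (expNegInvGlue 1)⁻¹ * (flatBump x • angular (fun t => g t - c) x) + c

variable {g : ℝ → ℝ}

lemma conicalExtension_smul_sphPt (hg : Function.Periodic g (2 * π)) (c : ℝ) {r : ℝ} (hr : 0 < r)
    (t : ℝ) : conicalExtension g c (r • sphPt t) =
      (expNegInvGlue 1)⁻¹ * (expNegInvGlue (r ^ 2) * (g t - c)) + c := by
  rw [conicalExtension, angular_smul_sphPt (g := fun t => g t - c) (hg.comp (· - c)) hr, flatBump,
    norm_smul, norm_sphPt, mul_one, Real.norm_of_nonneg hr.le, smul_eq_mul]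

lemma conicalExtension_sphPt (hg : Function.Periodic g (2 * π)) (c t : ℝ) :
    conicalExtension g c (sphPt t) = g t := by
  have hpos : expNegInvGlue 1 ≠ 0 := (expNegInvGlue.pos_of_pos one_pos).ne'
  have := conicalExtension_smul_sphPt hg c one_pos t
  rw [one_smul, one_pow, inv_mul_cancel_left₀ hpos, sub_add_cancel] at this
  exact this

variable (hg : Function.Periodic g (2 * π)) (hs : ContDiff ℝ ∞ g)
include hg hs

lemma smoothHomogeneous_angular_sub_const (c : ℝ) :
    SmoothHomogeneous 0 (angular fun t => g t - c) :=
  smoothHomogeneous_angular (hg.comp (· - c)) (hs.sub contDiff_const)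

lemma fderiv_conicalExtension_zero (c : ℝ) : fderiv ℝ (conicalExtension g c) 0 = 0 := by
  have hcone := (smoothHomogeneous_angular_sub_const hg hs c).hasFDerivAt_flatBump_smul_zero
  have hscaled := (hcone.const_mul (expNegInvGlue 1)⁻¹).add_const c
  rw [smul_zero] at hscaled
  exact hscaled.fderiv

lemma contDiff_conicalExtension (c : ℝ) : ContDiff ℝ ∞ (conicalExtension g c) :=
  (contDiff_const.mul (smoothHomogeneous_angular_sub_const hg hs c).contDiff_flatBump_smul).add
    contDiff_const

lemma hasFDerivAt_conicalExtension (c : ℝ) (x : E2) :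
    HasFDerivAt (conicalExtension g c) (fderiv ℝ (conicalExtension g c) x) x :=
  ((contDiff_conicalExtension hg hs c).differentiable (by simp) x).hasFDerivAt

lemma fderiv_conicalExtension_radial (c : ℝ) {r : ℝ} (hr : 0 < r) (t : ℝ) :
    fderiv ℝ (conicalExtension g c) (r • sphPt t) (sphPt t) = (expNegInvGlue 1)⁻¹ *
      ((r ^ 2)⁻¹ ^ 2 * expNegInvGlue (r ^ 2) * (2 * r) * (g t - c)) := by
  have hray : HasDerivAt (fun s : ℝ => s • sphPt t) (sphPt t) r := by
    simpa using (hasDerivAt_id r).smul_const (sphPt t)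
  have hsq : HasDerivAt (fun s : ℝ => s ^ 2) (2 * r) r := by simpa using hasDerivAt_pow 2 r
  have hpolar := ((((hasDerivAt_expNegInvGlue (r ^ 2)).comp r hsq).mul_const (g t - c)).const_mul
    (expNegInvGlue 1)⁻¹).add_const c
  refine ((hasFDerivAt_conicalExtension hg hs c _).comp_hasDerivAt r hray).unique
    (hpolar.congr_of_eventuallyEq ?_)
  filter_upwards [lt_mem_nhds hr] with s hs_pos
  exact conicalExtension_smul_sphPt hg c hs_pos t

lemma fderiv_conicalExtension_tangential (c : ℝ) {r : ℝ} (hr : 0 < r) (t : ℝ) :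
    fderiv ℝ (conicalExtension g c) (r • sphPt t) (r • sphPt (t + π / 2)) =
      (expNegInvGlue 1)⁻¹ * (expNegInvGlue (r ^ 2) * deriv g t) := by
  have hpolar := (((hs.differentiable (by simp) t).hasDerivAt.sub_const c).const_mul
    (expNegInvGlue (r ^ 2))).const_mul (expNegInvGlue 1)⁻¹ |>.add_const c
  refine ((hasFDerivAt_conicalExtension hg hs c _).comp_hasDerivAt t
    ((hasDerivAt_sphPt t).const_smul r)).unique (hpolar.congr_of_eventuallyEq ?_)
  exact .of_forall fun s => conicalExtension_smul_sphPt hg c hr s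

lemma fderiv_conicalExtension_ne_zero {c : ℝ} (hc : ∀ t, deriv g t = 0 → g t ≠ c) {x : E2}
    (hx : x ≠ 0) : fderiv ℝ (conicalExtension g c) x ≠ 0 := by
  obtain ⟨t, ht⟩ := exists_eq_norm_smul_sphPt x
  have hr : 0 < ‖x‖ := norm_pos_iff.2 hx
  have hbump_one : expNegInvGlue 1 ≠ 0 := (expNegInvGlue.pos_of_pos one_pos).ne'
  have hbump : expNegInvGlue (‖x‖ ^ 2) ≠ 0 := (expNegInvGlue.pos_of_pos (by positivity)).ne'
  intro hzero
  have hradial := fderiv_conicalExtension_radial hg hs c hr t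
  have htangential := fderiv_conicalExtension_tangential hg hs c hr t
  rw [← ht, hzero] at hradial htangential
  have hderiv : deriv g t = 0 := by simpa [hbump_one, hbump] using htangential.symm
  have hvalue : g t - c = 0 := by simpa [hbump_one, hbump, hr.ne'] using hradial.symm
  exact hc t hderiv (sub_eq_zero.1 hvalue)

lemma inner_gradient_conicalExtension_sphPt (c t : ℝ) :
    ⟪gradient (conicalExtension g c) (sphPt t), sphPt t⟫ = 2 * (g t - c) := by
  have hbump_one : expNegInvGlue 1 ≠ 0 := (expNegInvGlue.pos_of_pos one_pos).ne'
  have hradial := fderiv_conicalExtension_radial hg hs c one_pos t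
  rw [one_smul] at hradial
  rw [inner_gradient_left, hradial]
  field_simp

end ConicalExtension

section Angle

lemma sub_eq_arccos_cos_sub_arccos_cos {X : Type*} [TopologicalSpace X] {S : Set X} {β : X → ℝ}
    (hS : IsPreconnected S) (hβ : ContinuousOn β S) (hsin : ∀ x ∈ S, 0 ≤ Real.sin (β x))
    {a b : X} (ha : a ∈ S) (hb : b ∈ S) :
    β b - β a = Real.arccos (Real.cos (β b)) - Real.arccos (Real.cos (β a)) := by
  have hmaps : MapsTo (fun x => β x - Real.arccos (Real.cos (β x))) S
      (AddSubgroup.zmultiples (2 * π) : Set ℝ) := fun x hx => by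
    have hcos : Real.cos (β x - Real.arccos (Real.cos (β x))) = 1 := by
      rw [Real.cos_sub, Real.cos_arccos (Real.neg_one_le_cos _) (Real.cos_le_one _),
        Real.sin_arccos, ← Real.sin_sq, Real.sqrt_sq (hsin x hx)]
      linarith [Real.sin_sq_add_cos_sq (β x)]
    obtain ⟨n, hn⟩ := (Real.cos_eq_one_iff _).1 hcos
    exact ⟨n, by simpa using hn⟩
  have hconst : β b - Real.arccos (Real.cos (β b)) = β a - Real.arccos (Real.cos (β a)) :=
    hS.constant_of_mapsTo
      (SetLike.isDiscrete_iff_discreteTopology.2 inferInstance)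
      (hβ.sub (Real.continuous_arccos.comp_continuousOn (Real.continuous_cos.comp_continuousOn hβ)))
      hmaps hb ha
  linarith

lemma sub_eq_arccos_add_arccos_sub_pi {β : ℝ → ℝ} {a b ε μ ν : ℝ} (hβ : ContinuousOn β (Icc a b))
    (hab : a ≤ b) (hε : ε = 1 ∨ ε = -1) (hsin : ∀ t ∈ Icc a b, 0 ≤ ε * Real.sin (β t))
    (ha : Real.cos (β a) = -(ε * μ)) (hb : Real.cos (β b) = ε * ν) :
    β b - β a = Real.arccos μ + Real.arccos ν - π := by
  rcases hε with rfl | rfl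
  · have hsub := sub_eq_arccos_cos_sub_arccos_cos isPreconnected_Icc hβ (by simpa using hsin)
      (left_mem_Icc.2 hab) (right_mem_Icc.2 hab)
    rw [hsub, ha, hb, one_mul, one_mul, Real.arccos_neg]
    ring
  · have hsub := sub_eq_arccos_cos_sub_arccos_cos isPreconnected_Icc hβ.neg (by simpa using hsin)
      (left_mem_Icc.2 hab) (right_mem_Icc.2 hab)
    simp only [Pi.neg_apply, Real.cos_neg, ha, hb, neg_mul, one_mul, neg_neg, Real.arccos_neg]
      at hsub
    linarith

variable {E : Type*} [NormedAddCommGroup E] [NormedSpace ℝ E]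

theorem exists_continuous_exp_eq {S : Set E} (hS : Convex ℝ S) {F : E → ℂ}
    (hF : ContinuousOn F S) (hne : ∀ x ∈ S, F x ≠ 0) :
    ∃ L : S → ℂ, Continuous L ∧ ∀ x : S, Complex.exp (L x) = F x := by
  rcases S.eq_empty_or_nonempty with rfl | hS'
  · exact ⟨fun _ => 0, continuous_const, fun x => x.2.elim⟩
  have := hS.contractibleSpace hS'
  have := hS.locallyPathConnectedSpace
  let f : C(S, ℂ) := ⟨S.domRestrict F, hF.domRestrict⟩
  obtain ⟨a₀⟩ : Nonempty S := hS'.to_subtype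
  obtain ⟨L, ⟨-, hL⟩, -⟩ := Complex.isCoveringMapOn_exp.existsUnique_continuousMap_lifts f
    (Complex.exp_log (hne a₀ a₀.2)) fun a => hne a a.2
  exact ⟨L, L.continuous, congrFun hL⟩

theorem exists_continuous_polarAngle {S : Set E} (hS : Convex ℝ S) {F : E → E2}
    (hF : ContinuousOn F S) (hne : ∀ x ∈ S, F x ≠ 0) :
    ∃ α : S → ℝ, Continuous α ∧ ∀ x : S, F x = ‖F x‖ • sphPt (α x) := by
  obtain ⟨L, hL, hexp⟩ := exists_continuous_exp_eq hS
    (toComplex.continuous.comp_continuousOn hF) fun x hx => by simpa using hne x hx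
  refine ⟨fun x => (L x).im, Complex.continuous_im.comp hL, fun x => toComplex.injective ?_⟩
  have hexp_x : Complex.exp (L x) = toComplex (F x) := hexp x
  rw [← toComplex.norm_map, map_smul, toComplex_sphPt, Complex.real_smul, ← hexp_x,
    Complex.norm_exp, Complex.ofReal_exp, ← Complex.exp_add, Complex.re_add_im]

lemma inner_sphPt_sphPt (s t : ℝ) : ⟪sphPt s, sphPt t⟫ = Real.cos (s - t) := by
  simp [sphPt, PiLp.inner_apply, Fin.sum_univ_two, Real.cos_sub]
  ring

/-- `β t` is the angle at the boundary point `sphPt t` from the outward normal `sphPt t` to the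
vector field `F`, measured counterclockwise. It drops by `2π` per turn, as it must when `F` has no
zeros in the disk: the direction of `F` then has winding number zero, and the frame turns once. -/
structure IsMovingFrameAngle (F : E2 → E2) (β : ℝ → ℝ) : Prop where
  continuous : Continuous β
  add_two_pi : ∀ t, β (t + 2 * π) = β t - 2 * π
  inner_eq : ∀ t s, ⟪F (sphPt t), sphPt (t + s)⟫ = ‖F (sphPt t)‖ * Real.cos (β t - s)

theorem exists_isMovingFrameAngle {F : E2 → E2} (hF : ContinuousOn F (Metric.closedBall 0 1))
    (hne : ∀ x ∈ Metric.closedBall 0 1, F x ≠ 0) : ∃ β, IsMovingFrameAngle F β := by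
  obtain ⟨α, hα, hpolar⟩ := exists_continuous_polarAngle (convex_closedBall 0 1) hF hne
  let p (t : ℝ) : Metric.closedBall (0 : E2) 1 := ⟨sphPt t, by simp [norm_sphPt]⟩
  have hp : Continuous p := Continuous.subtype_mk
    (continuous_iff_continuousAt.2 fun t => (hasDerivAt_sphPt t).continuousAt) _
  refine ⟨fun t => α (p t) - t, by fun_prop, fun t => ?_, fun t s => ?_⟩
  · have hperiod : p (t + 2 * π) = p t := Subtype.ext (periodic_sphPt t)
    simp only [hperiod]
    ring
  · conv_lhs => rw [hpolar (p t), real_inner_smul_left, inner_sphPt_sphPt]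
    simp only [p, sub_sub]

namespace IsMovingFrameAngle

variable {F : E2 → E2} {β : ℝ → ℝ} (hβ : IsMovingFrameAngle F β)
include hβ

lemma inner_radial (t : ℝ) : ⟪F (sphPt t), sphPt t⟫ = ‖F (sphPt t)‖ * Real.cos (β t) := by
  simpa using hβ.inner_eq t 0

lemma inner_tangential (t : ℝ) :
    ⟪F (sphPt t), sphPt (t + π / 2)⟫ = ‖F (sphPt t)‖ * Real.sin (β t) := by
  simpa [Real.cos_sub_pi_div_two] using hβ.inner_eq t (π / 2)

end IsMovingFrameAngle

end Angle

section SignOnInterval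

variable {u : ℝ → ℝ} {a b : ℝ}

lemma deriv_pos_of_pos_on_Ioo (hab : a < b) (hpos : ∀ t ∈ Ioo a b, 0 < u t) (ha : u a = 0)
    (ha' : deriv u a ≠ 0) : 0 < deriv u a := by
  refine ha'.lt_or_gt.resolve_left fun hneg => ?_
  obtain ⟨t, hsign, ht⟩ := (((eventually_nhdsWithin_sign_eq_of_deriv_neg hneg ha).filter_mono
    nhdsWithin_le_nhds).and (Ioo_mem_nhdsGT hab)).exists
  rw [sign_pos (hpos t ht), sign_neg (sub_neg.2 ht.1)] at hsign
  exact absurd hsign (by decide)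

lemma deriv_neg_of_pos_on_Ioo (hab : a < b) (hpos : ∀ t ∈ Ioo a b, 0 < u t) (hb : u b = 0)
    (hb' : deriv u b ≠ 0) : deriv u b < 0 := by
  refine hb'.lt_or_gt.resolve_right fun hgt => ?_
  obtain ⟨t, hsign, ht⟩ := (((eventually_nhdsWithin_sign_eq_of_deriv_pos hgt hb).filter_mono
    nhdsWithin_le_nhds).and (Ioo_mem_nhdsLT hab)).exists
  rw [sign_pos (hpos t ht), sign_neg (sub_neg.2 ht.2)] at hsign
  exact absurd hsign (by decide)

lemma exists_sign_mul_pos_on_Ioo (hu : ContinuousOn u (Ioo a b)) (hne : ∀ t ∈ Ioo a b, u t ≠ 0) :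
    ∃ ε : ℝ, (ε = 1 ∨ ε = -1) ∧ ∀ t ∈ Ioo a b, 0 < ε * u t := by
  by_contra! hcon
  obtain ⟨s, hs, hs'⟩ := hcon 1 (.inl rfl)
  obtain ⟨t, ht, ht'⟩ := hcon (-1) (.inr rfl)
  obtain ⟨z, hz, hz'⟩ := isPreconnected_Ioo.intermediate_value hs ht hu
    (show (0 : ℝ) ∈ Icc (u s) (u t) from ⟨by linarith, by linarith⟩)
  exact hne z hz hz'

/-- The zeros `a < b` of `u` are simple and consecutive, and `ε` is the sign of `u` between
them. -/
structure IsSimpleArch (u : ℝ → ℝ) (a b ε : ℝ) : Prop where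
  lt : a < b
  sign : ε = 1 ∨ ε = -1
  left : u a = 0
  right : u b = 0
  pos : ∀ t ∈ Ioo a b, 0 < ε * u t
  deriv_left : 0 < ε * deriv u a
  deriv_right : ε * deriv u b < 0

lemma exists_isSimpleArch (hab : a < b) (hu : ContinuousOn u (Ioo a b)) (ha : u a = 0)
    (hb : u b = 0) (hne : ∀ t ∈ Ioo a b, u t ≠ 0) (ha' : deriv u a ≠ 0) (hb' : deriv u b ≠ 0) :
    ∃ ε, IsSimpleArch u a b ε := by
  obtain ⟨ε, hε, hpos⟩ := exists_sign_mul_pos_on_Ioo hu hne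
  have hε0 : ε ≠ 0 := by rcases hε with rfl | rfl <;> norm_num
  refine ⟨ε, hab, hε, ha, hb, hpos, ?_, ?_⟩
  · simpa using deriv_pos_of_pos_on_Ioo hab hpos (by simp [ha]) (by simp [hε0, ha'])
  · simpa using deriv_neg_of_pos_on_Ioo hab hpos (by simp [hb]) (by simp [hε0, hb'])

lemma IsSimpleArch.nonneg {ε : ℝ} (h : IsSimpleArch u a b ε) {t : ℝ} (ht : t ∈ Icc a b) :
    0 ≤ ε * u t := by
  rcases eq_endpoints_or_mem_Ioo_of_mem_Icc ht with rfl | rfl | ht'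
  · simp [h.left]
  · simp [h.right]
  · exact (h.pos t ht').le

end SignOnInterval

lemma periodic_deriv {u : ℝ → ℝ} {T : ℝ} (hu : Function.Periodic u T) :
    Function.Periodic (deriv u) T := fun t => by
  rw [← deriv_comp_add_const, funext hu]

namespace Ribbon

variable {n : ℕ} (a : Ribbon n)

/-- Nodes numbered cyclically by all natural numbers. -/
def index (k : ℕ) : Fin n := ⟨k % n, Nat.mod_lt k a.n_pos⟩

/-- The angle of the `k`-th node, continued past `2π` so that angles increase with `k`. -/
def node (k : ℕ) : ℝ := a.θ (a.index k) + (k / n : ℕ) * (2 * π)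

lemma index_val (i : Fin n) : a.index i = i := Fin.ext (Nat.mod_eq_of_lt i.2)

lemma node_val (i : Fin n) : a.node i = a.θ i := by
  simp [node, index_val, Nat.div_eq_of_lt i.2]

lemma index_self : a.index n = a.index 0 := by simp [index]

lemma node_self : a.node n = a.node 0 + 2 * π := by
  simp [node, index_self, Nat.div_self a.n_pos]

lemma apply_node {α : Type*} {u : ℝ → α} (hu : Function.Periodic u (2 * π)) (k : ℕ) :
    u (a.node k) = u (a.θ (a.index k)) :=
  hu.nat_mul _ _

lemma periodic_deriv_g : Function.Periodic (deriv a.g) (2 * π) := periodic_deriv a.periodic_g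

lemma deriv_node (k : ℕ) : deriv a.g (a.node k) = 0 := by
  rw [a.apply_node a.periodic_deriv_g, a.node_crit]

lemma deriv_deriv_node_ne_zero (k : ℕ) : deriv (deriv a.g) (a.node k) ≠ 0 := by
  rw [a.apply_node (periodic_deriv a.periodic_deriv_g)]
  exact a.node_nondeg _

lemma node_nonneg (k : ℕ) : 0 ≤ a.node k :=
  add_nonneg (a.theta_mem _).1 (by positivity)

lemma strictMono_node : StrictMono a.node := fun i j hij => by
  rcases (Nat.div_le_div_right (c := n) hij.le).eq_or_lt with hdiv | hdiv
  · have hmod : i % n < j % n := by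
      have hi := Nat.div_add_mod i n
      have hj := Nat.div_add_mod j n
      rw [hdiv] at hi
      omega
    simpa [node, hdiv] using a.theta_mono (Fin.lt_def.2 hmod : a.index i < a.index j)
  · have hturn : ((i / n : ℕ) + 1 : ℝ) * (2 * π) ≤ (j / n : ℕ) * (2 * π) := by
      gcongr
      exact_mod_cast hdiv
    have hi := (a.theta_mem (a.index i)).2
    have hj := (a.theta_mem (a.index j)).1
    simp only [node]
    linarith

lemma exists_eq_theta_add {t : ℝ} (ht : deriv a.g t = 0) :
    ∃ (i : Fin n) (m : ℤ), t = a.θ i + m * (2 * π) := by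
  have hmod : deriv a.g (toIcoMod Real.two_pi_pos 0 t) = 0 := by
    rw [toIcoMod, a.periodic_deriv_g.sub_zsmul_eq, ht]
  obtain ⟨i, hi⟩ := a.crit_only _ (by simpa using toIcoMod_mem_Ico Real.two_pi_pos 0 t) hmod
  refine ⟨i, toIcoDiv Real.two_pi_pos 0 t, ?_⟩
  rw [← hi, ← zsmul_eq_mul, toIcoMod_add_toIcoDiv_zsmul]

lemma exists_eq_node {t : ℝ} (ht₀ : 0 ≤ t) (ht : deriv a.g t = 0) : ∃ k, t = a.node k := by
  obtain ⟨i, m, rfl⟩ := a.exists_eq_theta_add ht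
  have hturn : 0 < ((m + 1 : ℤ) : ℝ) * (2 * π) := by
    push_cast
    linarith [(a.theta_mem i).2]
  have hm : 0 < m + 1 := by exact_mod_cast pos_of_mul_pos_left hturn Real.two_pi_pos.le
  lift m to ℕ using Int.lt_add_one_iff.1 hm
  refine ⟨i + n * m, ?_⟩
  have hindex : a.index (i + n * m) = i := Fin.ext (by simp [index, Nat.mod_eq_of_lt i.2])
  rw [node, hindex, Nat.add_mul_div_left _ _ a.n_pos, Nat.div_eq_of_lt i.2]
  simp

lemma deriv_ne_zero_of_mem_Ioo (k : ℕ) {t : ℝ} (ht : t ∈ Ioo (a.node k) (a.node (k + 1))) :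
    deriv a.g t ≠ 0 := fun hzero => by
  obtain ⟨j, rfl⟩ := a.exists_eq_node ((a.node_nonneg k).trans ht.1.le) hzero
  have hkj := a.strictMono_node.lt_iff_lt.1 ht.1
  have hjk := a.strictMono_node.lt_iff_lt.1 ht.2
  omega

lemma exists_isSimpleArch_deriv (k : ℕ) :
    ∃ ε, IsSimpleArch (deriv a.g) (a.node k) (a.node (k + 1)) ε :=
  exists_isSimpleArch (a.strictMono_node k.lt_succ_self)
    (a.smooth_g.continuous_deriv (by simp)).continuousOn (a.deriv_node k) (a.deriv_node (k + 1))
    (fun _ => a.deriv_ne_zero_of_mem_Ioo k) (a.deriv_deriv_node_ne_zero k)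
    (a.deriv_deriv_node_ne_zero (k + 1))

lemma sum_range_nu_index : ∑ k ∈ Finset.range n, a.ν (a.index k) = a.sigma := by
  simp only [Finset.sum_range, index_val, sigma]

lemma sum_range_nu_index_succ : ∑ k ∈ Finset.range n, a.ν (a.index (k + 1)) = a.sigma := by
  rw [← a.sum_range_nu_index, ← add_left_inj (a.ν (a.index 0)),
    ← Finset.sum_range_succ' fun k => a.ν (a.index k), Finset.sum_range_succ, a.index_self]

end Ribbon

section Existence

lemma IsSimpleArch.mul_lt_mul {g : ℝ → ℝ} {a b ε : ℝ} (hg : Differentiable ℝ g)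
    (h : IsSimpleArch (deriv g) a b ε) : ε * g a < ε * g b := by
  refine strictMonoOn_of_deriv_pos (f := fun t => ε * g t) (convex_Icc a b)
    (hg.continuous.const_mul ε).continuousOn (fun t ht => ?_) (left_mem_Icc.2 h.lt.le)
    (right_mem_Icc.2 h.lt.le) h.lt
  rw [interior_Icc] at ht
  simpa using h.pos t ht

lemma IsSimpleArch.mul_deriv_deriv_nonpos {g : ℝ → ℝ} {a b c ε : ℝ} (hg : Differentiable ℝ g)
    (h : IsSimpleArch (deriv g) a b ε) (hc : c ∈ uIcc (g a) (g b)) :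
    (g a - c) * deriv (deriv g) a ≤ 0 ∧ (g b - c) * deriv (deriv g) b ≤ 0 := by
  have hlt := h.mul_lt_mul hg
  have hleft := h.deriv_left
  have hright := h.deriv_right
  rcases h.sign with rfl | rfl
  · rw [uIcc_of_le (by linarith)] at hc
    exact ⟨mul_nonpos_of_nonpos_of_nonneg (by linarith [hc.1]) (by linarith),
      mul_nonpos_of_nonneg_of_nonpos (by linarith [hc.2]) (by linarith)⟩
  · rw [uIcc_of_ge (by linarith)] at hc
    exact ⟨mul_nonpos_of_nonneg_of_nonpos (by linarith [hc.2]) (by linarith),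
      mul_nonpos_of_nonpos_of_nonneg (by linarith [hc.1]) (by linarith)⟩

namespace Ribbon

variable {n : ℕ} {a : Ribbon n}

variable (a) in
/-- The level `c` lies strictly below `φ` at every positive local maximum and negative local
minimum, and strictly above `φ` at every other node. -/
def IsSeparatingLevel (c : ℝ) : Prop :=
  ∀ i, a.ν i * ((a.g (a.θ i) - c) * deriv (deriv a.g) (a.θ i)) < 0

lemma differentiable_g (a : Ribbon n) : Differentiable ℝ a.g := a.smooth_g.differentiable (by simp)

lemma mul_deriv_deriv_nonpos_of_mem_uIcc {c : ℝ}
    (hc : ∀ i j : Fin n, (j : ℕ) = i + 1 → c ∈ uIcc (a.g (a.θ i)) (a.g (a.θ j))) (i : Fin n) :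
    (a.g (a.θ i) - c) * deriv (deriv a.g) (a.θ i) ≤ 0 := by
  have hpair (k : ℕ) (hk : k + 1 < n) :
      (a.g (a.node k) - c) * deriv (deriv a.g) (a.node k) ≤ 0 ∧
        (a.g (a.node (k + 1)) - c) * deriv (deriv a.g) (a.node (k + 1)) ≤ 0 := by
    obtain ⟨ε, harch⟩ := a.exists_isSimpleArch_deriv k
    refine harch.mul_deriv_deriv_nonpos a.differentiable_g ?_
    have := hc ⟨k, by omega⟩ ⟨k + 1, hk⟩ rfl
    rwa [← a.node_val, ← a.node_val] at this
  have htwo : 2 ≤ n := Nat.le_of_dvd a.n_pos a.n_even.two_dvd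
  rw [← a.node_val]
  rcases lt_or_ge ((i : ℕ) + 1) n with hi | hi
  · exact (hpair i hi).1
  · have hprev := (hpair (i - 1) (by omega)).2
    rwa [Nat.sub_add_cancel (by omega)] at hprev

lemma exists_isSeparatingLevel (hpos : ∀ i, a.ν i = 1) {c : ℝ}
    (hc : ∀ i, (a.g (a.θ i) - c) * deriv (deriv a.g) (a.θ i) ≤ 0) :
    ∃ c', a.IsSeparatingLevel c' := by
  let minima := {i | 0 < deriv (deriv a.g) (a.θ i)}
  let maxima := {i | deriv (deriv a.g) (a.θ i) < 0}
  obtain ⟨c', hmin, hmax⟩ := Set.Finite.exists_between'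
    (s := (fun i => a.g (a.θ i)) '' minima) (t := (fun i => a.g (a.θ i)) '' maxima)
    (toFinite _) (toFinite _) <| by
      rintro _ ⟨i, hi, rfl⟩ _ ⟨j, hj, rfl⟩
      have hi_le : a.g (a.θ i) - c ≤ 0 := nonpos_of_mul_nonpos_left (hc i) hi
      have hj_ge : 0 ≤ a.g (a.θ j) - c := nonneg_of_mul_nonpos_left (hc j) hj
      refine lt_of_le_of_ne (by linarith) fun heq => ?_
      obtain rfl := a.values_distinct i j heq
      exact lt_asymm (show 0 < deriv (deriv a.g) (a.θ i) from hi) hj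
  refine ⟨c', fun i => ?_⟩
  rw [hpos i, Int.cast_one, one_mul]
  rcases (a.node_nondeg i).lt_or_gt with hi | hi
  · exact mul_neg_of_pos_of_neg (sub_pos.2 (hmax _ ⟨i, hi, rfl⟩)) hi
  · exact mul_neg_of_neg_of_pos (sub_neg.2 (hmin _ ⟨i, hi, rfl⟩)) hi

namespace IsSeparatingLevel

variable {c : ℝ} (hc : a.IsSeparatingLevel c)
include hc

lemma ne_of_deriv_eq_zero {t : ℝ} (ht : deriv a.g t = 0) : a.g t ≠ c := by
  obtain ⟨i, m, rfl⟩ := a.exists_eq_theta_add ht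
  rw [a.periodic_g.int_mul m]
  rintro rfl
  simpa using hc i

theorem isExtension_conicalExtension : IsExtension a (conicalExtension a.g c) := by
  refine ⟨contDiff_conicalExtension a.periodic_g a.smooth_g c,
    conicalExtension_sphPt a.periodic_g c, fun x hx => ?_, fun i => ?_⟩
  · exact fderiv_conicalExtension_ne_zero a.periodic_g a.smooth_g
      (fun _ => hc.ne_of_deriv_eq_zero) (ne_zero_of_mem_unit_sphere ⟨x, hx⟩)
  · rw [inner_gradient_conicalExtension_sphPt a.periodic_g a.smooth_g]
    have hi := hc i
    rw [← mul_assoc] at hi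
    exact ⟨fun hmax => by linarith [pos_of_mul_neg_left hi hmax.le],
      fun hmin => by linarith [neg_of_mul_neg_left hi hmin.le]⟩

theorem critPts_conicalExtension : critPts (conicalExtension a.g c) = {0} := by
  ext x
  refine ⟨fun hx => ?_, ?_⟩
  · by_contra hne
    exact fderiv_conicalExtension_ne_zero a.periodic_g a.smooth_g
      (fun _ => hc.ne_of_deriv_eq_zero) hne hx.2
  · rintro rfl
    exact ⟨Metric.mem_ball_self one_pos, fderiv_conicalExtension_zero a.periodic_g a.smooth_g c⟩

end IsSeparatingLevel

end Ribbon

end Existence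

namespace IsExtension

variable {n : ℕ} {a : Ribbon n} {f : E2 → ℝ} (hf : IsExtension a f)
include hf

lemma continuous_gradient : Continuous (gradient f) :=
  (InnerProductSpace.toDual ℝ E2).symm.continuous.comp (hf.1.continuous_fderiv (by simp))

lemma gradient_sphPt_ne_zero (t : ℝ) : gradient f (sphPt t) ≠ 0 := by
  simpa [gradient] using hf.2.2.1 (sphPt t) (by simp [norm_sphPt])

lemma norm_gradient_sphPt_pos (t : ℝ) : 0 < ‖gradient f (sphPt t)‖ :=
  norm_pos_iff.2 (hf.gradient_sphPt_ne_zero t)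

lemma gradient_ne_zero (hcrit : critPts f = ∅) {x : E2} (hx : x ∈ Metric.closedBall 0 1) :
    gradient f x ≠ 0 := by
  have hfderiv : fderiv ℝ f x ≠ 0 := fun hzero => by
    rcases (mem_closedBall_zero_iff.1 hx).lt_or_eq with hlt | heq
    · exact (hcrit ▸ ⟨mem_ball_zero_iff.2 hlt, hzero⟩ : x ∈ (∅ : Set E2))
    · exact hf.2.2.1 x (mem_sphere_zero_iff_norm.2 heq) hzero
  simpa [gradient] using hfderiv

theorem exists_isMovingFrameAngle (hcrit : critPts f = ∅) :
    ∃ β, IsMovingFrameAngle (gradient f) β :=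
  _root_.exists_isMovingFrameAngle hf.continuous_gradient.continuousOn
    fun _ => hf.gradient_ne_zero hcrit

lemma deriv_eq_inner (t : ℝ) : deriv a.g t = ⟪gradient f (sphPt t), sphPt (t + π / 2)⟫ := by
  have hfderiv := (hf.1.differentiable (by simp) (sphPt t)).hasFDerivAt
  rw [inner_gradient_left, ← funext hf.2.1]
  exact (hfderiv.comp_hasDerivAt t (hasDerivAt_sphPt t)).deriv

lemma nu_mul_inner_mul_neg (i : Fin n) :
    a.ν i * ⟪gradient f (sphPt (a.θ i)), sphPt (a.θ i)⟫ * deriv (deriv a.g) (a.θ i) < 0 := by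
  rcases (a.node_nondeg i).lt_or_gt with hmax | hmin
  · exact mul_neg_of_pos_of_neg ((hf.2.2.2 i).1 hmax) hmax
  · exact mul_neg_of_neg_of_pos ((hf.2.2.2 i).2 hmin) hmin

variable {β : ℝ → ℝ} (hβ : IsMovingFrameAngle (gradient f) β)
include hβ

lemma deriv_eq_norm_mul_sin (t : ℝ) : deriv a.g t = ‖gradient f (sphPt t)‖ * Real.sin (β t) := by
  rw [hf.deriv_eq_inner, hβ.inner_tangential]

lemma nu_mul_cos_mul_neg (k : ℕ) :
    a.ν (a.index k) * Real.cos (β (a.node k)) * deriv (deriv a.g) (a.node k) < 0 := by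
  have hsign := hf.nu_mul_inner_mul_neg (a.index k)
  rw [← a.apply_node (periodic_deriv a.periodic_deriv_g), ← a.apply_node periodic_sphPt,
    hβ.inner_radial] at hsign
  refine neg_of_mul_neg_right ?_ (hf.norm_gradient_sphPt_pos (a.node k)).le
  linarith

lemma cos_node_eq (k : ℕ) {ε : ℝ} (hε : ε = 1 ∨ ε = -1)
    (hdd : 0 < ε * deriv (deriv a.g) (a.node k)) :
    Real.cos (β (a.node k)) = -(ε * a.ν (a.index k)) := by
  have hsin : Real.sin (β (a.node k)) = 0 := by
    simpa [a.deriv_node, (hf.norm_gradient_sphPt_pos _).ne'] using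
      (hf.deriv_eq_norm_mul_sin hβ (a.node k)).symm
  have hneg := hf.nu_mul_cos_mul_neg hβ k
  rcases Real.sin_eq_zero_iff_cos_eq.1 hsin with hcos | hcos <;>
    rcases hε with rfl | rfl <;> rcases a.nu_sign (a.index k) with hν | hν <;>
    rw [hcos, hν] at hneg ⊢ <;> push_cast at hneg ⊢ <;> linarith

lemma sub_node_eq (k : ℕ) : β (a.node (k + 1)) - β (a.node k) =
    -(a.ν (a.index k) + a.ν (a.index (k + 1))) * (π / 2) := by
  obtain ⟨ε, harch⟩ := a.exists_isSimpleArch_deriv k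
  have hsin : ∀ t ∈ Icc (a.node k) (a.node (k + 1)), 0 ≤ ε * Real.sin (β t) := fun t ht => by
    have hnonneg := harch.nonneg ht
    rw [hf.deriv_eq_norm_mul_sin hβ, mul_left_comm] at hnonneg
    exact nonneg_of_mul_nonneg_right hnonneg (hf.norm_gradient_sphPt_pos t)
  have hleft := hf.cos_node_eq hβ k harch.sign harch.deriv_left
  have hright := hf.cos_node_eq hβ (k + 1) (ε := -ε)
    (by simpa [neg_eq_iff_eq_neg, or_comm] using harch.sign) (by linarith [harch.deriv_right])
  rw [neg_mul, neg_neg] at hright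
  have arccos_nu (i : Fin n) : Real.arccos (a.ν i) = π / 2 - a.ν i * (π / 2) := by
    rcases a.nu_sign i with hν | hν <;> simp [hν]
  rw [sub_eq_arccos_add_arccos_sub_pi hβ.continuous.continuousOn harch.lt.le harch.sign hsin
    hleft hright, arccos_nu, arccos_nu]
  ring

omit hβ in
theorem sigma_eq_two (hcrit : critPts f = ∅) : a.sigma = 2 := by
  obtain ⟨β, hβ⟩ := hf.exists_isMovingFrameAngle hcrit
  have hsum : -2 * π = -((a.sigma : ℝ) + a.sigma) * (π / 2) :=
    calc -2 * π = β (a.node n) - β (a.node 0) := by rw [a.node_self, hβ.add_two_pi]; ring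
      _ = ∑ k ∈ Finset.range n, (β (a.node (k + 1)) - β (a.node k)) :=
        (Finset.sum_range_sub (fun k => β (a.node k)) n).symm
      _ = -((a.sigma : ℝ) + a.sigma) * (π / 2) := by
        simp_rw [hf.sub_node_eq hβ]
        rw [← Finset.sum_mul, Finset.sum_neg_distrib, Finset.sum_add_distrib]
        exact_mod_cast congrArg₂ (fun x y : ℤ => -((x : ℝ) + y) * (π / 2))
          a.sum_range_nu_index a.sum_range_nu_index_succ
  have hreal : (a.sigma : ℝ) = 2 := by
    refine mul_right_cancel₀ Real.pi_ne_zero ?_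
    linarith
  exact_mod_cast hreal

end IsExtension

theorem stmt_18_general {n : ℕ} {a : Ribbon n} (hσ : a.sigma ≠ 2) {c : ℝ}
    (hc : a.IsSeparatingLevel c) :
    (∀ f : E2 → ℝ, IsExtension a f → 1 ≤ (critPts f).encard) ∧
    (∃ f : E2 → ℝ, IsExtension a f ∧ (critPts f).encard = 1) ∧
    gammaR a = 1 := by
  have hge : ∀ f, IsExtension a f → 1 ≤ (critPts f).encard := fun f hf => by
    rw [one_le_encard_iff_nonempty, nonempty_iff_ne_empty]
    exact fun hcrit => hσ (hf.sigma_eq_two hcrit)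
  have hex : ∃ f, IsExtension a f ∧ (critPts f).encard = 1 :=
    ⟨conicalExtension a.g c, hc.isExtension_conicalExtension,
      by rw [hc.critPts_conicalExtension, encard_singleton]⟩
  exact ⟨hge, hex, le_antisymm (sInf_le hex) (le_sInf fun _ ⟨f, hf, hk⟩ => hk ▸ hge f hf)⟩

/-- If `a` is a positive alternation with `n ≥ 4` nodes (all nodes positive and the closed
intervals with endpoints `l i`, `l (i+1)` for consecutive nodes `i = 1, …, n−1` have a common
point), then `γ(a) = 1`: every extension of `a` has at least one critical point in the open
unit disk and some extension has exactly one critical point. -/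
theorem stmt_18 (n : ℕ) (hn : 4 ≤ n) (a : Ribbon n) (hpos : ∀ i, a.ν i = 1)
    (halt : ∃ c : ℝ, ∀ i j : Fin n, (j : ℕ) = (i : ℕ) + 1 →
      c ∈ Set.uIcc (a.g (a.θ i)) (a.g (a.θ j))) :
    (∀ f : E2 → ℝ, IsExtension a f → 1 ≤ (critPts f).encard) ∧
    (∃ f : E2 → ℝ, IsExtension a f ∧ (critPts f).encard = 1) ∧
    gammaR a = 1 := by
  obtain ⟨c, hc⟩ := halt
  obtain ⟨c', hc'⟩ := Ribbon.exists_isSeparatingLevel hpos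
    (Ribbon.mul_deriv_deriv_nonpos_of_mem_uIcc hc)
  have hsigma : a.sigma = n := by simp [Ribbon.sigma, hpos]
  exact stmt_18_general (by omega) hc'
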